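/- For each n < ω and each model M of T_cas, the set of formulas {I_n(x)} ∪ {¬R(a, x) : a ∈ P^M} isolates a unique complete nonalgebraic 1-type over M: any two elements of an elementary extension of M realizing all these formulas and lying outside M have the same type over M. -/

import Mathlib

/-!
The proof is a back-and-forth of length `λ⁺`. A set `A` is *closed* if with every `a ∈ A ∩ P` it
contains the (countably many) `R`-neighbours of `a` in the sets `I_m`. The approximations are
isomorphisms between closed sets of size at most `λ`, encoded by their graphs (`CasIso`). The
hypotheses on `b` and `b'` say that `id_M ∪ {(b, b')}` is such an isomorphism.

Let `G` be an approximation and `x` an element outside its domain.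
* If `x ∈ I_m`, closedness forces `x` to be unrelated to the domain, so every `y ∈ I_m` outside
  the range is an image for `x`.
* If `x ∈ I_ω`, saturation gives `y ∈ I_ω` with the prescribed relations, and
  `CasSat.exists_fresh_Iomega` makes it new.
* If `x ∈ P`, first add all its neighbours in the `I_m`. Saturation then gives a `y` with the
  prescribed relations (new by `CasSat.exists_fresh_P`). The counting axiom, `m` neighbours in
  `I_m` for `x` and for `y` alike, shows that all neighbours of `y` in `I_m` are already in the
  range, so the extended isomorphism is between closed sets.

Approximations are stable under unions of chains, so transfinite induction along a well-order of
`N` of type `λ⁺` (`exists_transfinite_extension`) yields an automorphism.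
-/

open Cardinal

/-- A model of Casanovas's theory `T_cas`. -/
structure CasModel (M : Type u) where
  P : Set M
  In : ℕ → Set M
  R : M → M → Prop
  P_inf : P.Infinite
  In_inf : ∀ n, (In n).Infinite
  In_sub : ∀ n, In n ⊆ Pᶜ
  In_disj : ∀ m n, m ≠ n → Disjoint (In m) (In n)
  R_dom : ∀ a b, R a b → a ∈ P ∧ b ∈ Pᶜ
  count_fin : ∀ a ∈ P, ∀ n : ℕ, {b | b ∈ In n ∧ R a b}.Finite
  count : ∀ a ∈ P, ∀ n : ℕ, {b | b ∈ In n ∧ R a b}.ncard = n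
  ext1 : ∀ B0 B1 : Finset M, ↑B0 ⊆ (Pᶜ : Set M) → ↑B1 ⊆ (Pᶜ : Set M) → Disjoint B0 B1 →
    (∀ n : ℕ, ((B1 : Set M) ∩ In n).ncard ≤ n) →
    ∃ a ∈ P, (∀ b ∈ B1, R a b) ∧ (∀ b ∈ B0, ¬ R a b)
  ext2 : ∀ A0 A1 : Finset M, ↑A0 ⊆ P → ↑A1 ⊆ P → Disjoint A0 A1 →
    ∃ b ∈ (Pᶜ : Set M), (∀ a ∈ A1, R a b) ∧ (∀ a ∈ A0, ¬ R a b)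

/-- `I_ω`: the elements of `I = Pᶜ` lying in no `I_n`. -/
def CasModel.Iomega {M : Type u} (C : CasModel M) : Set M := (C.P)ᶜ \ ⋃ n, C.In n

/-- The part of `λ⁺`-saturation of a model of `T_cas` on which the back-and-forth relies. -/
structure CasSat {N : Type u} (C : CasModel N) (lam : Cardinal.{u}) : Prop where
  aleph : ℵ₀ ≤ lam
  sat1 : ∀ n : ℕ, Order.succ lam ≤ #(C.In n)
  sat2 : ∀ B1 B0 : Set N, B1 ⊆ (C.P)ᶜ → B0 ⊆ (C.P)ᶜ → Disjoint B1 B0 →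
      #B1 ≤ lam → #B0 ≤ lam → (∀ n : ℕ, #↥(B1 ∩ C.In n) ≤ (n : Cardinal.{u})) →
      ∃ a ∈ C.P, (∀ b ∈ B1, C.R a b) ∧ (∀ b ∈ B0, ¬ C.R a b)
  sat3 : ∀ A1 A0 : Set N, A1 ⊆ C.P → A0 ⊆ C.P → Disjoint A1 A0 →
      #A1 ≤ lam → #A0 ≤ lam →
      ∃ b ∈ C.Iomega, (∀ a ∈ A1, C.R a b) ∧ (∀ a ∈ A0, ¬ C.R a b)

/-- `G` is the graph of an isomorphism between two subsets of the model, each of which contains,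
with every `a ∈ P`, all `R`-neighbours of `a` in the sets `I_m`. -/
structure CasIso {N : Type u} (C : CasModel N) (G : Set (N × N)) : Prop where
  inj : ∀ p ∈ G, ∀ q ∈ G, (p.1 = q.1 ↔ p.2 = q.2)
  pres_P : ∀ p ∈ G, (p.1 ∈ C.P ↔ p.2 ∈ C.P)
  pres_In : ∀ p ∈ G, ∀ m, (p.1 ∈ C.In m ↔ p.2 ∈ C.In m)
  pres_R : ∀ p ∈ G, ∀ q ∈ G, (C.R p.1 q.1 ↔ C.R p.2 q.2)
  dcl : ∀ p ∈ G, ∀ m, ∀ z ∈ C.In m, C.R p.1 z → ∃ w, (z, w) ∈ G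
  rcl : ∀ p ∈ G, ∀ m, ∀ z ∈ C.In m, C.R p.2 z → ∃ w, (w, z) ∈ G

/-! ### Transfinite iteration of extension steps -/

/-- A class `Good` of sets that is stable under unions of chains, and in which every set of size
at most `lam` can be enlarged, keeping that bound, so as to meet any given requirement `T i`,
contains a set meeting all requirements at once, provided that the requirements are well-ordered
with proper initial segments of size at most `lam`. -/
theorem exists_transfinite_extension {α ι : Type u} (r : ι → ι → Prop) [IsWellOrder ι r]
    {lam : Cardinal.{u}} (hlam : ℵ₀ ≤ lam) (hr : ∀ i, #{j // r j i} ≤ lam)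
    (Good : Set α → Prop)
    (hU : ∀ c : Set (Set α), c.Nonempty → IsChain (· ⊆ ·) c → (∀ s ∈ c, Good s) → Good (⋃₀ c))
    (T : ι → Set α → Prop) (hT : ∀ i s t, s ⊆ t → T i s → T i t)
    (step : ∀ i G, Good G → #G ≤ lam → ∃ G', G ⊆ G' ∧ Good G' ∧ #G' ≤ lam ∧ T i G')
    (G0 : Set α) (hG0 : Good G0) (hG0c : #G0 ≤ lam) :
    ∃ G, G0 ⊆ G ∧ Good G ∧ (∀ i, T i G) ∧ (#ι ≤ lam → #G ≤ lam) := by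
  classical
  have step' : ∀ i G, ∃ G', G ⊆ G' ∧ (Good G → #G ≤ lam → Good G' ∧ #G' ≤ lam ∧ T i G') := by
    intro i G
    by_cases h : Good G ∧ #G ≤ lam
    · obtain ⟨G', h1, h2⟩ := step i G h.1 h.2
      exact ⟨G', h1, fun _ _ => h2⟩
    · exact ⟨G, subset_rfl, fun h1 h2 => absurd ⟨h1, h2⟩ h⟩
  choose ext hsub hext using step'
  have wf : WellFounded r := IsWellFounded.wf
  let F : ι → Set α := wf.fix fun i IH =>
    ext i (⋃₀ insert G0 (Set.range fun j : {j // r j i} => IH j.1 j.2))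
  have hF : ∀ i, F i = ext i (⋃₀ insert G0 (Set.range fun j : {j // r j i} => F j.1)) :=
    fun i => wf.fix_eq _ i
  have h0 : ∀ i, G0 ⊆ F i := fun i => by
    rw [hF i]
    exact (Set.subset_sUnion_of_mem (Set.mem_insert _ _)).trans (hsub i _)
  have hmono : ∀ i j, r j i → F j ⊆ F i := fun i j hji => by
    conv_rhs => rw [hF i]
    refine subset_trans (Set.subset_sUnion_of_mem ?_) (hsub i _)
    exact Set.mem_insert_of_mem _ ⟨⟨j, hji⟩, rfl⟩
  have hcmp : ∀ i j, F i ⊆ F j ∨ F j ⊆ F i := fun i j => by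
    rcases trichotomous_of r i j with h | h | h
    · exact Or.inl (hmono _ _ h)
    · subst h; exact Or.inl subset_rfl
    · exact Or.inr (hmono _ _ h)
  have hchain : ∀ {κ : Type u} (g : κ → ι),
      IsChain (· ⊆ ·) (insert G0 (Set.range fun k => F (g k))) := by
    intro κ g s hs t ht _
    rcases hs with rfl | ⟨k, rfl⟩ <;> rcases ht with rfl | ⟨l, rfl⟩
    · exact Or.inl subset_rfl
    · exact Or.inl (h0 _)
    · exact Or.inr (h0 _)
    · exact hcmp _ _
  have hcard : ∀ {κ : Type u} (g : κ → ι), #κ ≤ lam → (∀ k, #(F (g k)) ≤ lam) →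
      #(⋃₀ insert G0 (Set.range fun k => F (g k)) : Set α) ≤ lam := by
    intro κ g hκ hk
    rw [Set.sUnion_insert, Set.sUnion_range]
    refine (mk_union_le _ _).trans (add_le_of_le hlam hG0c ?_)
    refine (mk_iUnion_le _).trans ?_
    exact (mul_le_mul' hκ (ciSup_le' hk)).trans (mul_eq_self hlam).le
  have key : ∀ i, Good (F i) ∧ #(F i) ≤ lam ∧ T i (F i) := by
    intro i
    induction i using wf.induction with
    | _ i ih =>
      rw [hF i]
      refine hext i _ (hU _ ⟨G0, Set.mem_insert _ _⟩ (hchain _) ?_) (hcard _ (hr i) ?_)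
      · rintro s (rfl | ⟨j, rfl⟩)
        · exact hG0
        · exact (ih j.1 j.2).1
      · exact fun j => (ih j.1 j.2).2.1
  refine ⟨⋃₀ insert G0 (Set.range fun i => F (id i)),
    Set.subset_sUnion_of_mem (Set.mem_insert _ _),
    hU _ ⟨G0, Set.mem_insert _ _⟩ (hchain _) ?_, fun i => ?_,
    fun h => hcard id h fun i => (key i).2.1⟩
  · rintro s (rfl | ⟨j, rfl⟩)
    · exact hG0
    · exact (key j).1
  · exact hT i _ _ (Set.subset_sUnion_of_mem (Set.mem_insert_of_mem _ ⟨i, rfl⟩)) (key i).2.2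

/-! ### Closure properties of partial isomorphisms -/

namespace CasIso

variable {N : Type u} {C : CasModel N} {G : Set (N × N)}

theorem swap (h : CasIso C G) : CasIso C (Prod.swap ⁻¹' G) where
  inj _ hp _ hq := (h.inj _ hp _ hq).symm
  pres_P _ hp := (h.pres_P _ hp).symm
  pres_In _ hp m := (h.pres_In _ hp m).symm
  pres_R _ hp _ hq := (h.pres_R _ hp _ hq).symm
  dcl _ hp := h.rcl _ hp
  rcl _ hp := h.dcl _ hp

theorem sUnion (c : Set (Set (N × N))) (hc : IsChain (· ⊆ ·) c) (h : ∀ s ∈ c, CasIso C s) :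
    CasIso C (⋃₀ c) := by
  have two : ∀ p ∈ ⋃₀ c, ∀ q ∈ ⋃₀ c, ∃ s ∈ c, p ∈ s ∧ q ∈ s := by
    rintro p ⟨s, hs, hp⟩ q ⟨t, ht, hq⟩
    rcases hc.total hs ht with hst | hts
    · exact ⟨t, ht, hst hp, hq⟩
    · exact ⟨s, hs, hp, hts hq⟩
  refine ⟨?_, ?_, ?_, ?_, ?_, ?_⟩
  · intro p hp q hq
    obtain ⟨s, hs, hp, hq⟩ := two p hp q hq
    exact (h s hs).inj p hp q hq
  · rintro p ⟨s, hs, hp⟩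
    exact (h s hs).pres_P p hp
  · rintro p ⟨s, hs, hp⟩
    exact (h s hs).pres_In p hp
  · intro p hp q hq
    obtain ⟨s, hs, hp, hq⟩ := two p hp q hq
    exact (h s hs).pres_R p hp q hq
  · rintro p ⟨s, hs, hp⟩ m z hz hR
    obtain ⟨w, hw⟩ := (h s hs).dcl p hp m z hz hR
    exact ⟨w, s, hs, hw⟩
  · rintro p ⟨s, hs, hp⟩ m z hz hR
    obtain ⟨w, hw⟩ := (h s hs).rcl p hp m z hz hR
    exact ⟨w, s, hs, hw⟩

theorem insert_pair (h : CasIso C G) {x y : N} (hx : ∀ p ∈ G, p.1 ≠ x) (hy : ∀ p ∈ G, p.2 ≠ y)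
    (hP : x ∈ C.P ↔ y ∈ C.P) (hI : ∀ m, x ∈ C.In m ↔ y ∈ C.In m)
    (hR1 : ∀ p ∈ G, (C.R p.1 x ↔ C.R p.2 y)) (hR2 : ∀ p ∈ G, (C.R x p.1 ↔ C.R y p.2))
    (hd : ∀ m, ∀ z ∈ C.In m, C.R x z → ∃ w, (z, w) ∈ G)
    (hr : ∀ m, ∀ z ∈ C.In m, C.R y z → ∃ w, (w, z) ∈ G) :
    CasIso C (insert (x, y) G) := by
  have irr : ∀ z, ¬ C.R z z := fun z hz => (C.R_dom _ _ hz).2 (C.R_dom _ _ hz).1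
  refine ⟨?_, ?_, ?_, ?_, ?_, ?_⟩
  · rintro p (rfl | hp) q (rfl | hq)
    · simp
    · simp [(hx q hq).symm, (hy q hq).symm]
    · simp [hx p hp, hy p hp]
    · exact h.inj p hp q hq
  · rintro p (rfl | hp)
    · exact hP
    · exact h.pres_P p hp
  · rintro p (rfl | hp)
    · exact hI
    · exact h.pres_In p hp
  · rintro p (rfl | hp) q (rfl | hq)
    · simp [irr]
    · exact hR2 q hq
    · exact hR1 p hp
    · exact h.pres_R p hp q hq
  · rintro p (rfl | hp) m z hz hR
    · exact (hd m z hz hR).imp fun w hw => Or.inr hw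
    · exact (h.dcl p hp m z hz hR).imp fun w hw => Or.inr hw
  · rintro p (rfl | hp) m z hz hR
    · exact (hr m z hz hR).imp fun w hw => Or.inr hw
    · exact (h.rcl p hp m z hz hR).imp fun w hw => Or.inr hw

end CasIso

/-! ### New realizations -/

namespace CasSat

variable {N : Type u} {C : CasModel N} {lam : Cardinal.{u}}

theorem card_insert_le (hs : CasSat C lam) {α : Type u} {s : Set α} (h : #s ≤ lam) (a : α) :
    #(insert a s : Set α) ≤ lam :=
  mk_insert_le.trans (add_le_of_le hs.aleph h (one_le_aleph0.trans hs.aleph))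

theorem notMem_In_of_Iomega {b : N} (hb : b ∈ C.Iomega) (m : ℕ) : b ∉ C.In m :=
  fun h => hb.2 (Set.mem_iUnion.2 ⟨m, h⟩)

/-- The elements of `I_ω` provided by saturation can be chosen outside a given small set. -/
theorem exists_fresh_Iomega (hs : CasSat C lam) (S : Set N) (hS : #S ≤ lam) (A1 A0 : Set N)
    (h1 : A1 ⊆ C.P) (h0 : A0 ⊆ C.P) (hdisj : Disjoint A1 A0) (h1S : A1 ⊆ S) (h0S : A0 ⊆ S) :
    ∃ b ∈ C.Iomega, b ∉ S ∧ (∀ a ∈ A1, C.R a b) ∧ (∀ a ∈ A0, ¬ C.R a b) := by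
  -- An element of `P` outside `S` whose only possible neighbour in `S` is a given `c`.
  have probe : ∀ c ∈ C.Iomega, (∀ a ∈ S ∩ C.P, ¬ C.R a c) →
      ∃ a ∈ C.P, a ∉ S ∧ C.R a c ∧ ∀ d ∈ S, C.R a d → d = c := by
    intro c hc hcS
    obtain ⟨a, haP, ha1, ha0⟩ := hs.sat2 {c} ((S ∩ C.Pᶜ) \ {c})
      (Set.singleton_subset_iff.2 hc.1) (fun z hz => hz.1.2) Set.disjoint_sdiff_right
      (by simpa using one_le_aleph0.trans hs.aleph)
      ((mk_le_mk_of_subset fun z hz => hz.1.1).trans hS)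
      (fun m => by
        have : ({c} : Set N) ∩ C.In m = ∅ := by
          rw [Set.singleton_inter_eq_empty]; exact notMem_In_of_Iomega hc m
        simp [this])
    have hac := ha1 c rfl
    refine ⟨a, haP, fun haS => hcS a ⟨haS, haP⟩ hac, hac, fun d hd hR => ?_⟩
    by_contra hne
    exact ha0 d ⟨⟨hd, (C.R_dom _ _ hR).2⟩, hne⟩ hR
  have hSP : #(S ∩ C.P : Set N) ≤ lam := (mk_le_mk_of_subset Set.inter_subset_left).trans hS
  have hA1 : #A1 ≤ lam := (mk_le_mk_of_subset h1S).trans hS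
  have hA0 : #A0 ≤ lam := (mk_le_mk_of_subset h0S).trans hS
  obtain ⟨c, hc, -, hcS⟩ := hs.sat3 ∅ (S ∩ C.P) (Set.empty_subset _) Set.inter_subset_right
    (Set.empty_disjoint _) (by simp) hSP
  obtain ⟨a, haP, haS, hac, ha⟩ := probe c hc hcS
  obtain ⟨c', hc', -, hcS'⟩ := hs.sat3 ∅ (insert a (S ∩ C.P)) (Set.empty_subset _)
    (Set.insert_subset haP Set.inter_subset_right) (Set.empty_disjoint _) (by simp)
    (hs.card_insert_le hSP a)
  obtain ⟨a', haP', haS', -, ha'⟩ := probe c' hc' fun z hz => hcS' z (Or.inr hz)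
  have hne : c ≠ c' := fun h => hcS' a (Or.inl rfl) (h ▸ hac)
  -- No element of `S` is related to both `a` and `a'`, as it would equal both `c` and `c'`.
  obtain ⟨b, hb, hb1, hb0⟩ := hs.sat3 (insert a (insert a' A1)) A0
    (Set.insert_subset haP (Set.insert_subset haP' h1)) h0
    (by
      rw [Set.disjoint_insert_left, Set.disjoint_insert_left]
      exact ⟨fun h => haS (h0S h), fun h => haS' (h0S h), hdisj⟩)
    (hs.card_insert_le (hs.card_insert_le hA1 _) _) hA0
  refine ⟨b, hb, fun hbS => hne ?_, fun z hz => hb1 z (Or.inr (Or.inr hz)), hb0⟩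
  rw [← ha b hbS (hb1 a (Or.inl rfl)), ← ha' b hbS (hb1 a' (Or.inr (Or.inl rfl)))]

/-- The elements of `P` provided by saturation can be chosen outside a given small set. -/
theorem exists_fresh_P (hs : CasSat C lam) (S : Set N) (hS : #S ≤ lam) (B1 B0 : Set N)
    (h1 : B1 ⊆ C.Pᶜ) (h0 : B0 ⊆ C.Pᶜ) (hdisj : Disjoint B1 B0) (h1S : B1 ⊆ S) (h0S : B0 ⊆ S)
    (hcount : ∀ n : ℕ, #↥(B1 ∩ C.In n) ≤ (n : Cardinal.{u})) :
    ∃ a ∈ C.P, a ∉ S ∧ (∀ b ∈ B1, C.R a b) ∧ (∀ b ∈ B0, ¬ C.R a b) := by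
  -- Relating the new element to a `c` unrelated to `S` keeps it out of `S`.
  obtain ⟨c, hc, hcS, -, hcR⟩ := hs.exists_fresh_Iomega S hS ∅ (S ∩ C.P) (Set.empty_subset _)
    Set.inter_subset_right (Set.empty_disjoint _) (Set.empty_subset _) Set.inter_subset_left
  obtain ⟨a, haP, ha1, ha0⟩ := hs.sat2 (insert c B1) B0 (Set.insert_subset hc.1 h1) h0
    (by
      rw [Set.disjoint_insert_left]
      exact ⟨fun h => hcS (h0S h), hdisj⟩)
    (hs.card_insert_le ((mk_le_mk_of_subset h1S).trans hS) _)
    ((mk_le_mk_of_subset h0S).trans hS)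
    (fun m => by
      rw [Set.insert_inter_of_notMem (notMem_In_of_Iomega hc m)]
      exact hcount m)
  exact ⟨a, haP, fun haS => hcR a ⟨haS, haP⟩ (ha1 c (Or.inl rfl)),
    fun z hz => ha1 z (Or.inr hz), ha0⟩

/-! ### One-point extensions -/

theorem extend_In (hs : CasSat C lam) {G : Set (N × N)} (hG : CasIso C G) (hGc : #G ≤ lam)
    {x : N} {m : ℕ} (hx : x ∈ C.In m) :
    ∃ G', G ⊆ G' ∧ CasIso C G' ∧ #G' ≤ lam ∧ ∃ y, (x, y) ∈ G' := by
  by_cases hdom : ∃ y, (x, y) ∈ G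
  · exact ⟨G, subset_rfl, hG, hGc, hdom⟩
  obtain ⟨y, hy, hyr⟩ : ∃ y ∈ C.In m, y ∉ Prod.snd '' G := by
    by_contra! hcon
    exact absurd ((hs.sat1 m).trans ((mk_le_mk_of_subset hcon).trans (mk_image_le.trans hGc)))
      (not_le_of_gt (Order.lt_succ lam))
  have hxP := C.In_sub m hx
  have hyP := C.In_sub m hy
  have disj : ∀ {z}, z ∈ C.In m → ∀ k, z ∈ C.In k ↔ k = m := fun {z} hz k =>
    ⟨fun hk => by_contra fun hne => Set.disjoint_left.1 (C.In_disj k m hne) hk hz,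
      fun h => h ▸ hz⟩
  refine ⟨insert (x, y) G, Set.subset_insert _ _, hG.insert_pair ?_ ?_ ?_ ?_ ?_ ?_ ?_ ?_,
    hs.card_insert_le hGc _, y, Or.inl rfl⟩
  · rintro ⟨u, v⟩ hp rfl
    exact hdom ⟨v, hp⟩
  · rintro ⟨u, v⟩ hp rfl
    exact hyr ⟨_, hp, rfl⟩
  · exact iff_of_false hxP hyP
  · exact fun k => (disj hx k).trans (disj hy k).symm
  · refine fun p hp => iff_of_false (fun h => hdom (hG.dcl p hp m x hx h)) fun h => ?_
    obtain ⟨w, hw⟩ := hG.rcl p hp m y hy h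
    exact hyr ⟨_, hw, rfl⟩
  · exact fun p hp => iff_of_false (fun h => hxP (C.R_dom _ _ h).1)
      fun h => hyP (C.R_dom _ _ h).1
  · exact fun _ _ _ h => absurd (C.R_dom _ _ h).1 hxP
  · exact fun _ _ _ h => absurd (C.R_dom _ _ h).1 hyP

theorem extend_Iomega (hs : CasSat C lam) {G : Set (N × N)} (hG : CasIso C G) (hGc : #G ≤ lam)
    {x : N} (hx : x ∈ C.Iomega) :
    ∃ G', G ⊆ G' ∧ CasIso C G' ∧ #G' ≤ lam ∧ ∃ y, (x, y) ∈ G' := by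
  by_cases hdom : ∃ y, (x, y) ∈ G
  · exact ⟨G, subset_rfl, hG, hGc, hdom⟩
  obtain ⟨y, hy, hyr, hy1, hy0⟩ := hs.exists_fresh_Iomega (Prod.snd '' G) (mk_image_le.trans hGc)
    (Prod.snd '' {p | p ∈ G ∧ C.R p.1 x}) (Prod.snd '' {p | p ∈ G ∧ p.1 ∈ C.P ∧ ¬ C.R p.1 x})
    (by
      rintro _ ⟨p, ⟨hp, hR⟩, rfl⟩
      exact (hG.pres_P p hp).1 (C.R_dom _ _ hR).1)
    (by
      rintro _ ⟨p, ⟨hp, hP, -⟩, rfl⟩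
      exact (hG.pres_P p hp).1 hP)
    (by
      rw [Set.disjoint_left]
      rintro _ ⟨p, ⟨hp, hR⟩, rfl⟩ ⟨q, ⟨hq, -, hR'⟩, hqp⟩
      exact hR' ((hG.inj q hq p hp).2 hqp ▸ hR))
    (Set.image_mono fun p hp => hp.1) (Set.image_mono fun p hp => hp.1)
  refine ⟨insert (x, y) G, Set.subset_insert _ _, hG.insert_pair ?_ ?_ ?_ ?_ ?_ ?_ ?_ ?_,
    hs.card_insert_le hGc _, y, Or.inl rfl⟩
  · rintro ⟨u, v⟩ hp rfl
    exact hdom ⟨v, hp⟩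
  · rintro ⟨u, v⟩ hp rfl
    exact hyr ⟨_, hp, rfl⟩
  · exact iff_of_false hx.1 hy.1
  · exact fun k => iff_of_false (notMem_In_of_Iomega hx k) (notMem_In_of_Iomega hy k)
  · refine fun p hp => ⟨fun h => hy1 _ ⟨p, ⟨hp, h⟩, rfl⟩, fun h => ?_⟩
    by_contra hn
    exact hy0 _ ⟨p, ⟨hp, (hG.pres_P p hp).2 (C.R_dom _ _ h).1, hn⟩, rfl⟩ h
  · exact fun p hp => iff_of_false (fun h => hx.1 (C.R_dom _ _ h).1)
      fun h => hy.1 (C.R_dom _ _ h).1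
  · exact fun _ _ _ h => absurd (C.R_dom _ _ h).1 hx.1
  · exact fun _ _ _ h => absurd (C.R_dom _ _ h).1 hy.1

/-- An element of `P` can be added once its neighbours in all `I_m` lie in the domain. -/
theorem extend_P_of_closed (hs : CasSat C lam) {G : Set (N × N)} (hG : CasIso C G)
    (hGc : #G ≤ lam) {x : N} (hx : x ∈ C.P)
    (hnb : ∀ m, ∀ z ∈ C.In m, C.R x z → ∃ w, (z, w) ∈ G) :
    ∃ G', G ⊆ G' ∧ CasIso C G' ∧ #G' ≤ lam ∧ ∃ y, (x, y) ∈ G' := by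
  by_cases hdom : ∃ y, (x, y) ∈ G
  · exact ⟨G, subset_rfl, hG, hGc, hdom⟩
  have hnb' : ∀ z, ∃ w, ∀ m, z ∈ C.In m → C.R x z → (z, w) ∈ G := by
    intro z
    by_cases h : ∃ w, (z, w) ∈ G
    · exact h.imp fun w hw _ _ _ => hw
    · exact ⟨z, fun m hz hR => absurd (hnb m z hz hR) h⟩
  choose f hf using hnb'
  let D : ℕ → Set N := fun m => {z | z ∈ C.In m ∧ C.R x z}
  have hDG : ∀ m, ∀ z ∈ D m, (z, f z) ∈ G := fun m z hz => hf z m hz.1 hz.2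
  have hDfin : ∀ m, (f '' D m).Finite := fun m => (C.count_fin x hx m).image f
  have hDcard : ∀ m, (f '' D m).ncard = m := fun m => by
    rw [Set.InjOn.ncard_image]
    · exact C.count x hx m
    · exact fun z hz z' hz' h => (hG.inj _ (hDG m z hz) _ (hDG m z' hz')).2 h
  obtain ⟨y, hy, hyr, hy1, hy0⟩ := hs.exists_fresh_P (Prod.snd '' G) (mk_image_le.trans hGc)
    (Prod.snd '' {p | p ∈ G ∧ C.R x p.1}) (Prod.snd '' {p | p ∈ G ∧ p.1 ∉ C.P ∧ ¬ C.R x p.1})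
    (by
      rintro _ ⟨p, ⟨hp, hR⟩, rfl⟩
      exact fun h => (C.R_dom _ _ hR).2 ((hG.pres_P p hp).2 h))
    (by
      rintro _ ⟨p, ⟨hp, hP, -⟩, rfl⟩
      exact fun h => hP ((hG.pres_P p hp).2 h))
    (by
      rw [Set.disjoint_left]
      rintro _ ⟨p, ⟨hp, hR⟩, rfl⟩ ⟨q, ⟨hq, -, hR'⟩, hqp⟩
      exact hR' ((hG.inj q hq p hp).2 hqp ▸ hR))
    (Set.image_mono fun p hp => hp.1) (Set.image_mono fun p hp => hp.1)
    (by
      intro m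
      have hsub : Prod.snd '' {p | p ∈ G ∧ C.R x p.1} ∩ C.In m ⊆ f '' D m := by
        rintro _ ⟨⟨p, ⟨hp, hR⟩, rfl⟩, hm⟩
        have hpD : p.1 ∈ D m := ⟨(hG.pres_In p hp m).2 hm, hR⟩
        exact ⟨p.1, hpD, (hG.inj _ (hDG m _ hpD) p hp).1 rfl⟩
      refine (mk_le_mk_of_subset hsub).trans ?_
      rw [← Set.cast_ncard (hDfin m), hDcard m])
  have hRxy : ∀ p ∈ G, (C.R x p.1 ↔ C.R y p.2) := by
    refine fun p hp => ⟨fun h => hy1 _ ⟨p, ⟨hp, h⟩, rfl⟩, fun h => ?_⟩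
    by_contra hn
    exact hy0 _ ⟨p, ⟨hp, fun hP => (C.R_dom _ _ h).2 ((hG.pres_P p hp).1 hP), hn⟩, rfl⟩ h
  refine ⟨insert (x, y) G, Set.subset_insert _ _, hG.insert_pair ?_ ?_ ?_ ?_ ?_ hRxy hnb ?_,
    hs.card_insert_le hGc _, y, Or.inl rfl⟩
  · rintro ⟨u, v⟩ hp rfl
    exact hdom ⟨v, hp⟩
  · rintro ⟨u, v⟩ hp rfl
    exact hyr ⟨_, hp, rfl⟩
  · exact iff_of_true hx hy
  · exact fun k => iff_of_false (fun h => C.In_sub k h hx) (fun h => C.In_sub k h hy)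
  · exact fun p hp => iff_of_false (fun h => (C.R_dom _ _ h).2 hx)
      fun h => (C.R_dom _ _ h).2 hy
  · intro m z hz hR
    -- `f` maps the `m` neighbours of `x` in `I_m` onto the `m` neighbours of `y` in `I_m`.
    have heq : f '' D m = {b | b ∈ C.In m ∧ C.R y b} := by
      refine Set.eq_of_subset_of_ncard_le ?_ ?_ (C.count_fin y hy m)
      · rintro _ ⟨u, hu, rfl⟩
        exact ⟨(hG.pres_In _ (hDG m u hu) m).1 hu.1, (hRxy _ (hDG m u hu)).1 hu.2⟩
      · rw [hDcard m, C.count y hy m]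
    obtain ⟨u, hu, rfl⟩ : z ∈ f '' D m := by rw [heq]; exact ⟨hz, hR⟩
    exact ⟨u, hDG m u hu⟩

theorem extend_dom (hs : CasSat C lam) {G : Set (N × N)} (hG : CasIso C G) (hGc : #G ≤ lam)
    (x : N) : ∃ G', G ⊆ G' ∧ CasIso C G' ∧ #G' ≤ lam ∧ ∃ y, (x, y) ∈ G' := by
  by_cases hx : x ∈ C.P
  · let D : Set N := ⋃ m, {z | z ∈ C.In m ∧ C.R x z}
    have hDc : #D ≤ lam :=
      (Set.countable_iUnion fun m => (C.count_fin x hx m).countable).le_aleph0.trans hs.aleph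
    obtain ⟨G', hGG', hG', hT, hc⟩ := exists_transfinite_extension (ι := D) WellOrderingRel
      hs.aleph (fun i => (mk_subtype_le _).trans hDc) (CasIso C)
      (fun c _ hc h => CasIso.sUnion c hc h) (fun z G => ∃ w, (z.1, w) ∈ G)
      (fun _ _ _ hst h => h.imp fun _ hw => hst hw)
      (fun z G hG hGc => by
        obtain ⟨m, hm⟩ := Set.mem_iUnion.1 z.2
        exact hs.extend_In hG hGc hm.1) G hG hGc
    obtain ⟨G'', h1, h2⟩ := hs.extend_P_of_closed hG' (hc hDc) hx
      fun m z hz hR => hT ⟨z, Set.mem_iUnion.2 ⟨m, hz, hR⟩⟩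
    exact ⟨G'', hGG'.trans h1, h2⟩
  · by_cases hI : ∃ m, x ∈ C.In m
    · obtain ⟨m, hm⟩ := hI
      exact hs.extend_In hG hGc hm
    · exact hs.extend_Iomega hG hGc ⟨hx, fun h => hI (Set.mem_iUnion.1 h)⟩

theorem extend_ran (hs : CasSat C lam) {G : Set (N × N)} (hG : CasIso C G) (hGc : #G ≤ lam)
    (x : N) : ∃ G', G ⊆ G' ∧ CasIso C G' ∧ #G' ≤ lam ∧ ∃ y, (y, x) ∈ G' := by
  have hcard : ∀ {H : Set (N × N)}, #H ≤ lam → #(Prod.swap ⁻¹' H : Set (N × N)) ≤ lam :=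
    fun h => (mk_preimage_of_injective _ _ Prod.swap_injective).trans h
  obtain ⟨G', h1, h2, h3, y, h4⟩ := hs.extend_dom hG.swap (hcard hGc) x
  exact ⟨Prod.swap ⁻¹' G', fun p hp => h1 (by simpa using hp), h2.swap, hcard h3, y, h4⟩

/-- Every small partial isomorphism between closed sets extends to an automorphism. -/
theorem exists_automorphism (hs : CasSat C lam) (hN : #N = Order.succ lam) {G0 : Set (N × N)}
    (hG0 : CasIso C G0) (hG0c : #G0 ≤ lam) :
    ∃ f : N ≃ N, (∀ x, f x ∈ C.P ↔ x ∈ C.P) ∧ (∀ (m : ℕ) (x), f x ∈ C.In m ↔ x ∈ C.In m) ∧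
      (∀ x y, C.R (f x) (f y) ↔ C.R x y) ∧ ∀ p ∈ G0, f p.1 = p.2 := by
  obtain ⟨r, hwo, hr⟩ := Cardinal.exists_ord_eq N
  obtain ⟨G, hsub, hG, hT, -⟩ := exists_transfinite_extension r hs.aleph
    (fun i => by
      have h := Cardinal.card_typein_lt i hr
      rw [hN, Order.lt_succ_iff] at h
      exact h)
    (CasIso C) (fun c _ hc h => CasIso.sUnion c hc h)
    (fun x G => (∃ y, (x, y) ∈ G) ∧ ∃ y, (y, x) ∈ G)
    (fun _ _ _ hst h => ⟨h.1.imp fun _ hw => hst hw, h.2.imp fun _ hw => hst hw⟩)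
    (fun x G hG hGc => by
      obtain ⟨G1, h1, hG1, hc1, y, hy⟩ := hs.extend_dom hG hGc x
      obtain ⟨G2, h2, hG2, hc2, hz⟩ := hs.extend_ran hG1 hc1 x
      exact ⟨G2, h1.trans h2, hG2, hc2, ⟨y, h2 hy⟩, hz⟩) G0 hG0 hG0c
  choose f hf using fun x => (hT x).1
  choose g hg using fun x => (hT x).2
  exact ⟨⟨f, g, fun x => (hG.inj _ (hg (f x)) _ (hf x)).2 rfl,
      fun x => (hG.inj _ (hf (g x)) _ (hg x)).1 rfl⟩,
    fun x => (hG.pres_P _ (hf x)).symm, fun m x => (hG.pres_In _ (hf x) m).symm,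
    fun x y => (hG.pres_R _ (hf x) _ (hf y)).symm,
    fun p hp => (hG.inj _ (hf p.1) _ (hsub hp)).1 rfl⟩

end CasSat

/-! ### Conjugacy of realizations -/

/-- For each `n`, the formulas `{I_n(x)} ∪ {¬R(a,x) : a ∈ P^M}` isolate a unique complete
nonalgebraic 1-type over a model `M` of `T_cas`: in a saturated (and hence homogeneous)
elementary extension `N` of `M` (here: `N ⊨ T_cas` is `λ⁺`-saturated of cardinality `λ⁺`,
with the underlying set of `M` a subset of size `≤ λ` which is algebraically closed and
satisfies the extension axioms with internal witnesses), any two realizations `b, b'`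
outside `M` are conjugate by an automorphism of `N` fixing `M` pointwise. -/
theorem stmt_7 {N : Type u} (C : CasModel N) (lam : Cardinal.{u}) (hlam : ℵ₀ ≤ lam)
    (hN : #N = Order.succ lam)
    -- saturation conditions on N (as in the characterization of λ⁺-saturation):
    (hsat1 : ∀ n : ℕ, Order.succ lam ≤ #(C.In n))
    (hsat1' : Order.succ lam ≤ #(C.Iomega))
    (hsat2 : ∀ B1 B0 : Set N, B1 ⊆ (C.P)ᶜ → B0 ⊆ (C.P)ᶜ → Disjoint B1 B0 →
      #B1 ≤ lam → #B0 ≤ lam → (∀ n : ℕ, #↥(B1 ∩ C.In n) ≤ (n : Cardinal.{u})) →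
      ∃ a ∈ C.P, (∀ b ∈ B1, C.R a b) ∧ (∀ b ∈ B0, ¬ C.R a b))
    (hsat3 : ∀ A1 A0 : Set N, A1 ⊆ C.P → A0 ⊆ C.P → Disjoint A1 A0 →
      #A1 ≤ lam → #A0 ≤ lam →
      ∃ b ∈ C.Iomega, (∀ a ∈ A1, C.R a b) ∧ (∀ a ∈ A0, ¬ C.R a b))
    -- M is (the underlying set of) an elementary submodel of N of size ≤ λ:
    (M : Set N) (hMcard : #M ≤ lam)
    (hMacl : ∀ a ∈ M, a ∈ C.P → ∀ x, (∃ m, x ∈ C.In m) → C.R a x → x ∈ M)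
    (hMext1 : ∀ B0 B1 : Finset N, ↑B0 ⊆ M ∩ (C.P)ᶜ → ↑B1 ⊆ M ∩ (C.P)ᶜ → Disjoint B0 B1 →
      (∀ n : ℕ, ((B1 : Set N) ∩ C.In n).ncard ≤ n) →
      ∃ a ∈ M ∩ C.P, (∀ b ∈ B1, C.R a b) ∧ (∀ b ∈ B0, ¬ C.R a b))
    (hMext2 : ∀ A0 A1 : Finset N, ↑A0 ⊆ M ∩ C.P → ↑A1 ⊆ M ∩ C.P → Disjoint A0 A1 →
      ∃ b ∈ M ∩ (C.P)ᶜ, (∀ a ∈ A1, C.R a b) ∧ (∀ a ∈ A0, ¬ C.R a b))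
    -- b, b' are two realizations of the type, lying outside M:
    (n : ℕ) (b b' : N) (hb : b ∈ C.In n) (hb' : b' ∈ C.In n)
    (hbM : b ∉ M) (hb'M : b' ∉ M)
    (hRb : ∀ a ∈ M, a ∈ C.P → ¬ C.R a b) (hRb' : ∀ a ∈ M, a ∈ C.P → ¬ C.R a b') :
    ∃ f : N ≃ N, (∀ x, f x ∈ C.P ↔ x ∈ C.P) ∧ (∀ (m : ℕ) (x), f x ∈ C.In m ↔ x ∈ C.In m) ∧
      (∀ x y, C.R (f x) (f y) ↔ C.R x y) ∧ (∀ m ∈ M, f m = m) ∧ f b = b' := by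
  have hs : CasSat C lam := ⟨hlam, hsat1, hsat2, hsat3⟩
  have hid : CasIso C ((fun x => (x, x)) '' M) := by
    refine ⟨?_, ?_, ?_, ?_, ?_, ?_⟩
    · rintro _ ⟨x, -, rfl⟩ _ ⟨y, -, rfl⟩
      rfl
    · rintro _ ⟨x, -, rfl⟩
      rfl
    · rintro _ ⟨x, -, rfl⟩ m
      rfl
    · rintro _ ⟨x, -, rfl⟩ _ ⟨y, -, rfl⟩
      rfl
    · rintro _ ⟨x, hx, rfl⟩ m z hz hR
      exact ⟨z, z, hMacl x hx (C.R_dom _ _ hR).1 z ⟨m, hz⟩ hR, rfl⟩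
    · rintro _ ⟨x, hx, rfl⟩ m z hz hR
      exact ⟨z, z, hMacl x hx (C.R_dom _ _ hR).1 z ⟨m, hz⟩ hR, rfl⟩
  have hbP := C.In_sub n hb
  have hbP' := C.In_sub n hb'
  have disj : ∀ {z}, z ∈ C.In n → ∀ k, z ∈ C.In k ↔ k = n := fun {z} hz k =>
    ⟨fun hk => by_contra fun hne => Set.disjoint_left.1 (C.In_disj k n hne) hk hz,
      fun h => h ▸ hz⟩
  have hG0 : CasIso C (insert (b, b') ((fun x => (x, x)) '' M)) := by
    refine hid.insert_pair ?_ ?_ (iff_of_false hbP hbP')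
      (fun k => (disj hb k).trans (disj hb' k).symm) ?_ ?_ ?_ ?_
    · rintro _ ⟨x, hx, rfl⟩ rfl
      exact hbM hx
    · rintro _ ⟨x, hx, rfl⟩ rfl
      exact hb'M hx
    · rintro _ ⟨x, hx, rfl⟩
      exact iff_of_false (fun h => hRb x hx (C.R_dom _ _ h).1 h)
        fun h => hRb' x hx (C.R_dom _ _ h).1 h
    · exact fun p _ => iff_of_false (fun h => hbP (C.R_dom _ _ h).1)
        fun h => hbP' (C.R_dom _ _ h).1
    · exact fun _ _ _ h => absurd (C.R_dom _ _ h).1 hbP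
    · exact fun _ _ _ h => absurd (C.R_dom _ _ h).1 hbP'
  obtain ⟨f, h1, h2, h3, h4⟩ := hs.exists_automorphism hN hG0
    (hs.card_insert_le (mk_image_le.trans hMcard) _)
  exact ⟨f, h1, h2, h3, fun m hm => h4 (m, m) (Or.inr ⟨m, hm, rfl⟩), h4 (b, b') (Or.inl rfl)⟩
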